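/- arXiv:1609.01953 — 5 statements merged into one kernel-verified Lean document; each statement's English description precedes it below -/
import Mathlib

section
/- Let d ≥ 1 and let ψ : ℝ^{d+1} → ℝ be given by ψ(x) = −x_{d+1} + x_{d+1}²/2 − |x'|²/4. Then for every r ∈ (0, 2−√2), every x ∈ ℝ^{d+1} with |x| < r, and every ξ ∈ ℝ^{d+1} with |ξ|² = |∇ψ(x)|², one has Σ_{j,k=1}^{d+1} (∂_j∂_k ψ)(x)·(ξ_j ξ_k + ∂_jψ(x)·∂_kψ(x)) > 0. (Explicitly, this sum equals (3/2)·ξ_{d+1}² − |x'|²/4 + (x_{d+1}−1)²/2.) -/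
noncomputable section
open Real Set

/-- The Carleman weight `ψ(x) = -x_{d+1} + x_{d+1}²/2 - |x'|²/4` on `ℝ^{d+1}`. -/
def psiW (d : ℕ) (x : EuclideanSpace ℝ (Fin (d+1))) : ℝ :=
  -(x (Fin.last d)) + (x (Fin.last d))^2 / 2
    - (∑ i : Fin d, (x (Fin.castSucc i))^2) / 4

/-- The `j`-th partial derivative of `ψ`. -/
def pgrad (d : ℕ) (x : EuclideanSpace ℝ (Fin (d+1))) (j : Fin (d+1)) : ℝ :=
  fderiv ℝ (psiW d) x (EuclideanSpace.single j (1:ℝ))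

/-- The `(j,k)` entry of the Hessian of `ψ`. -/
def phess (d : ℕ) (x : EuclideanSpace ℝ (Fin (d+1))) (j k : Fin (d+1)) : ℝ :=
  fderiv ℝ (fun y => fderiv ℝ (psiW d) y (EuclideanSpace.single k (1:ℝ))) x
    (EuclideanSpace.single j (1:ℝ))

/-!
With `ℓ = d + 1` the last index, `ψ(x) = (3/4) x_ℓ² - x_ℓ - |x|²/4`, so its Hessian is the constant
matrix `(3/2) e_ℓ e_ℓᵀ - (1/2) I`. On `|ξ| = |∇ψ|` the sum is therefore
`(3/2) (ξ_ℓ² + (∂_ℓψ)²) - |∇ψ|²`. Completing the square in `x_ℓ`, this is at least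
`(2/3 - |x|²) / 4`, and `(2 - √2)² < 2/3`.
-/

lemma sum_sum_single_add_smul_one_mul {ι R : Type*} [Fintype ι] [DecidableEq ι]
    [NonAssocSemiring R] (l : ι) (a b : R) (M : ι → ι → R) :
    ∑ j, ∑ k, (Matrix.single l l a + b • 1 : Matrix ι ι R) j k * M j k
      = a * M l l + b * ∑ j, M j j := by
  simp [Matrix.single_apply, Matrix.one_apply, add_mul, Finset.sum_add_distrib, ite_and,
    Finset.mul_sum]

lemma norm_sq_eq_sum_castSucc_add_last {d : ℕ} (x : EuclideanSpace ℝ (Fin (d + 1))) :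
    ‖x‖ ^ 2 = ∑ i : Fin d, x i.castSucc ^ 2 + x (Fin.last d) ^ 2 := by
  rw [EuclideanSpace.real_norm_sq_eq, Fin.sum_univ_castSucc]

section Derivatives

variable (d : ℕ) (x : EuclideanSpace ℝ (Fin (d + 1)))

lemma psiW_eq_sub_norm_sq :
    psiW d x = 3 / 4 * x (Fin.last d) ^ 2 - x (Fin.last d) - 1 / 4 * ‖x‖ ^ 2 := by
  rw [norm_sq_eq_sum_castSucc_add_last, psiW]
  ring

lemma hasFDerivAt_psiW :
    HasFDerivAt (psiW d)
      ((3 / 2 * x (Fin.last d) - 1) • EuclideanSpace.proj (Fin.last d)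
        - (1 / 2 : ℝ) • innerSL ℝ x) x := by
  have hcoord := PiLp.hasFDerivAt_apply (𝕜 := ℝ) 2 x (Fin.last d)
  have hnorm : HasFDerivAt (fun y : EuclideanSpace ℝ (Fin (d + 1)) ↦ ‖y‖ ^ 2)
      (2 • innerSL ℝ x) x := (hasStrictFDerivAt_norm_sq x).hasFDerivAt
  rw [funext (psiW_eq_sub_norm_sq d)]
  refine ((((hcoord.pow 2).const_mul (3 / 4)).sub hcoord).sub
    (hnorm.const_mul (1 / 4))).congr_fderiv ?_
  module

lemma pgrad_eq (j : Fin (d + 1)) :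
    pgrad d x j = (3 / 2 * x (Fin.last d) - 1) * (if j = Fin.last d then 1 else 0)
      - 1 / 2 * x j := by
  simp [pgrad, (hasFDerivAt_psiW d x).fderiv, EuclideanSpace.inner_single_right, eq_comm]

lemma pgrad_last : pgrad d x (Fin.last d) = x (Fin.last d) - 1 := by
  rw [pgrad_eq, if_pos rfl]
  ring

lemma pgrad_castSucc (i : Fin d) : pgrad d x i.castSucc = -(1 / 2) * x i.castSucc := by
  rw [pgrad_eq, if_neg i.castSucc_ne_last]
  ring

lemma sum_pgrad_sq :
    ∑ j, pgrad d x j ^ 2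
      = (∑ i : Fin d, x i.castSucc ^ 2) / 4 + (x (Fin.last d) - 1) ^ 2 := by
  simp only [Fin.sum_univ_castSucc, pgrad_last, pgrad_castSucc, mul_pow, ← Finset.mul_sum]
  ring

lemma hasFDerivAt_pgrad (k : Fin (d + 1)) :
    HasFDerivAt (fun y ↦ pgrad d y k)
      ((3 / 2 * if k = Fin.last d then 1 else 0 : ℝ) • EuclideanSpace.proj (Fin.last d)
        - (1 / 2 : ℝ) • (EuclideanSpace.proj k : EuclideanSpace ℝ _ →L[ℝ] ℝ)) x := by
  have hcoord := PiLp.hasFDerivAt_apply (𝕜 := ℝ) 2 x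
  simp only [pgrad_eq]
  refine (((((hcoord (Fin.last d)).const_mul (3 / 2)).sub_const 1).mul_const _).sub
    ((hcoord k).const_mul (1 / 2))).congr_fderiv ?_
  module

lemma phess_eq (j k : Fin (d + 1)) :
    phess d x j k
      = (Matrix.single (Fin.last d) (Fin.last d) (3 / 2) + (-(1 / 2) : ℝ) • 1 :
          Matrix (Fin (d + 1)) (Fin (d + 1)) ℝ) j k := by
  change fderiv ℝ (fun y ↦ pgrad d y k) x (EuclideanSpace.single j 1) = _
  rw [(hasFDerivAt_pgrad d x k).fderiv]
  by_cases hk : k = Fin.last d <;>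
    simp [hk, Matrix.single_apply, Matrix.one_apply, sub_eq_add_neg, eq_comm]

end Derivatives

lemma sum_phess_mul_eq {d : ℕ} (x : EuclideanSpace ℝ (Fin (d + 1))) (ξ : Fin (d + 1) → ℝ)
    (hξ : ∑ j, ξ j ^ 2 = ∑ j, pgrad d x j ^ 2) :
    ∑ j, ∑ k, phess d x j k * (ξ j * ξ k + pgrad d x j * pgrad d x k)
      = 3 / 2 * ξ (Fin.last d) ^ 2 - (∑ i : Fin d, x i.castSucc ^ 2) / 4
        + (x (Fin.last d) - 1) ^ 2 / 2 := by
  calc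
    _ = 3 / 2 * (ξ (Fin.last d) ^ 2 + pgrad d x (Fin.last d) ^ 2)
        + -(1 / 2) * (∑ j, ξ j ^ 2 + ∑ j, pgrad d x j ^ 2) := by
      simp only [phess_eq, sum_sum_single_add_smul_one_mul, ← sq, Finset.sum_add_distrib]
    _ = _ := by
      rw [hξ, sum_pgrad_sq, pgrad_last]
      ring

lemma sum_sq_div_four_lt {d : ℕ} {x : EuclideanSpace ℝ (Fin (d + 1))} (hx : ‖x‖ ^ 2 < 2 / 3) :
    (∑ i : Fin d, x i.castSucc ^ 2) / 4 < (x (Fin.last d) - 1) ^ 2 / 2 := by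
  rw [norm_sq_eq_sum_castSucc_add_last] at hx
  linarith [sq_nonneg (x (Fin.last d) - 2 / 3)]

lemma sq_lt_two_thirds_of_lt_two_sub_sqrt_two {t : ℝ} (h₀ : 0 ≤ t) (ht : t < 2 - √2) :
    t ^ 2 < 2 / 3 := by
  have hsqrt : 6 / 5 < √2 := Real.lt_sqrt_of_sq_lt (by norm_num)
  calc
    t ^ 2 < (4 / 5) ^ 2 := by gcongr; linarith
    _ < 2 / 3 := by norm_num

theorem psi_pseudoconvex_general (d : ℕ) (x : EuclideanSpace ℝ (Fin (d + 1)))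
    (hx : ‖x‖ ^ 2 < 2 / 3) (ξ : Fin (d + 1) → ℝ)
    (hξ : ∑ j, ξ j ^ 2 = ∑ j, pgrad d x j ^ 2) :
    0 < ∑ j, ∑ k, phess d x j k * (ξ j * ξ k + pgrad d x j * pgrad d x k) ∧
    ∑ j, ∑ k, phess d x j k * (ξ j * ξ k + pgrad d x j * pgrad d x k)
      = 3 / 2 * ξ (Fin.last d) ^ 2 - (∑ i : Fin d, x i.castSucc ^ 2) / 4
        + (x (Fin.last d) - 1) ^ 2 / 2 := by
  have hsum := sum_phess_mul_eq x ξ hξ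
  refine ⟨?_, hsum⟩
  rw [hsum]
  linarith [sum_sq_div_four_lt hx, sq_nonneg (ξ (Fin.last d))]

/-- The weight `ψ` satisfies the pseudoconvexity condition of Lebeau–Robbiano for
`r < 2 - √2`: if `|ξ|² = |∇ψ(x)|²` then
`Σ_{j,k} ∂_j∂_kψ(x) (ξ_jξ_k + ∂_jψ(x)∂_kψ(x)) > 0`, and this sum equals
`(3/2)ξ_{d+1}² − |x'|²/4 + (x_{d+1}−1)²/2`. -/
theorem psi_pseudoconvex (d : ℕ) (hd : 1 ≤ d) (r : ℝ)
    (hr : r ∈ Set.Ioo (0:ℝ) (2 - Real.sqrt 2))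
    (x : EuclideanSpace ℝ (Fin (d+1))) (hx : ‖x‖ < r)
    (ξ : Fin (d+1) → ℝ)
    (hξ : ∑ j, (ξ j)^2 = ∑ j, (pgrad d x j)^2) :
    0 < ∑ j, ∑ k, phess d x j k * (ξ j * ξ k + pgrad d x j * pgrad d x k) ∧
    ∑ j, ∑ k, phess d x j k * (ξ j * ξ k + pgrad d x j * pgrad d x k)
      = (3/2) * (ξ (Fin.last d))^2
        - (∑ i : Fin d, (x (Fin.castSucc i))^2) / 4
        + (x (Fin.last d) - 1)^2 / 2 :=
  psi_pseudoconvex_general d x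
    (sq_lt_two_thirds_of_lt_two_sub_sqrt_two (norm_nonneg x) (hx.trans hr.2)) ξ hξ
end
end

section
/- Let d ≥ 1, 0 ≤ ω₋ < ω₊ < 1, G_u ∈ ℕ, u_max ≥ 0, α₁, β₁ > 0 and α₂, β₂ ≥ 0. Let {u_t : t ∈ [0,1]} be bounded measurable functions ℝ^d → ℝ such that for all t ∈ [0,1]: supp u_t ⊂ Λ_{G_u} and ‖u_t‖_∞ ≤ u_max; and for all t ∈ [ω₋, ω₊] and all δ ∈ (0, 1 − ω₊] there exists x₀ ∈ Λ_{G_u} with u_{t+δ}(x) − u_t(x) ≥ α₁·δ^{α₂}·χ_{B(x₀, β₁δ^{β₂})}(x) for all x ∈ ℝ^d. Let 0 < G₁ < G₂ and let D ⊂ ℝ^d be a (G₁,G₂)-Delone set. For ω ∈ [ω₋, ω₊]^D set V_ω(x) = Σ_{j∈D} u_{ω_j}(x − j), and let V_{ω+δ} be obtained by replacing every ω_j by ω_j + δ. Then for every ω ∈ [ω₋, ω₊]^D, every δ ∈ (0, 1 − ω₊] with β₁δ^{β₂} < (G₂ + G_u)/2, and every L ∈ (G₂ + G_u)ℕ, there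 exists a (G₂ + G_u, β₁δ^{β₂})-equidistributed sequence (z_k) such that for all x ∈ Λ_L: V_{ω+δ}(x) − V_ω(x) ≥ α₁·δ^{α₂}·χ_{W_{β₁δ^{β₂}}(L)}(x), where W_{β₁δ^{β₂}}(L) is the set associated to that sequence. -/
noncomputable section
open MeasureTheory Real Set

/-- The open cube `(-L/2, L/2)^d` in `ℝ^d`. -/
def cube (d : ℕ) (L : ℝ) : Set (EuclideanSpace ℝ (Fin d)) :=
  {x | ∀ i, x i ∈ Set.Ioo (-(L/2)) (L/2)}

/-- A `(G,δ)`-equidistributed sequence. -/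
def Equidistributed (d : ℕ) (G δ : ℝ)
    (z : (Fin d → ℤ) → EuclideanSpace ℝ (Fin d)) : Prop :=
  ∀ j : Fin d → ℤ, Metric.ball (z j) δ ⊆
    {x | ∀ i, x i - G * (j i : ℝ) ∈ Set.Ioo (-(G/2)) (G/2)}

/-- The set `W_δ(L)`. -/
def Wset (d : ℕ) (δ L : ℝ) (z : (Fin d → ℤ) → EuclideanSpace ℝ (Fin d)) :
    Set (EuclideanSpace ℝ (Fin d)) :=
  (⋃ j, Metric.ball (z j) δ) ∩ cube d L

/-!
A positive gap `u_{t+δ} - u_t` on a ball forces that ball into the common support `Λ_{G_u}`, since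
off the supports the gap vanishes. Every cell `Λ_{G₂+G_u} + k` has a point `j` of `D` within
`Λ_{G₂}` of its centre `k`, so the gap ball of the site `j`, translated to `j`, lies inside the
cell; its centre is `z_k`. Since `D` is uniformly discrete only finitely many sites contribute at a
given point, so the two potentials may be subtracted termwise. All gaps are nonnegative, hence the
difference is at least the gap of any one site.
-/

/-- The translated cube `Λ_G + x`, with membership spelled out coordinatewise. -/
def cubeAt (d : ℕ) (G : ℝ) (x : EuclideanSpace ℝ (Fin d)) : Set (EuclideanSpace ℝ (Fin d)) :=
  {y | ∀ i, y i - x i ∈ Ioo (-(G / 2)) (G / 2)}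

/-- A `(G₁,G₂)`-Delone set: at most one point in each translate of `Λ_{G₁}` and at least one in each
translate of `Λ_{G₂}`. The condition `0 < G₁ < G₂` is not part of the notion. -/
structure IsCubeDelone (d : ℕ) (G₁ G₂ : ℝ) (D : Set (EuclideanSpace ℝ (Fin d))) : Prop where
  subsingleton_inter : ∀ x, (D ∩ cubeAt d G₁ x).Subsingleton
  nonempty_inter : ∀ x, (D ∩ cubeAt d G₂ x).Nonempty

/-- The alloy-type potential `x ↦ ∑_{j ∈ D} v_j(x - j)` with single-site potentials `v_j`; a site
potential may depend on its site, so that `V_ω` is the case `v_j = u_{ω_j}`. Where the series is not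
summable the value is `0`. -/
def alloyPotential {E : Type*} [AddGroup E] (D : Set E) (v : D → E → ℝ) (x : E) : ℝ :=
  ∑' j : D, v j (x - j)

lemma finite_inter_of_pairwise_le_dist {X : Type*} [MetricSpace X] [ProperSpace X]
    {D K : Set X} {ε : ℝ} (hε : 0 < ε) (hD : D.Pairwise fun a b => ε ≤ dist a b)
    (hK : Bornology.IsBounded K) : (K ∩ D).Finite := by
  have hdiscrete : IsDiscrete D := ⟨DiscreteTopology.of_forall_le_dist hε fun a b hab =>
    hD a.2 b.2 (Subtype.coe_ne_coe.2 hab)⟩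
  exact Metric.finite_isBounded_inter_isClosed hdiscrete hK
    (Metric.isClosed_of_pairwise_le_dist hε hD)

lemma summable_apply_sub_of_pairwise_le_dist {E : Type*} [NormedAddCommGroup E] [ProperSpace E]
    {D K : Set E} {ε : ℝ} (hε : 0 < ε) (hD : D.Pairwise fun a b => ε ≤ dist a b)
    (hK : Bornology.IsBounded K) {v : D → E → ℝ} (hv : ∀ j, Function.support (v j) ⊆ K) (x : E) :
    Summable fun j : D => v j (x - j) := by
  have hfin : ((x - ·) '' K ∩ D).Finite :=
    finite_inter_of_pairwise_le_dist hε hD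
      ((IsometryEquiv.subLeft x).isometry.lipschitz.isBounded_image hK)
  exact summable_of_hasFiniteSupport <|
    (hfin.preimage Subtype.val_injective.injOn).subset fun j hj =>
      ⟨⟨x - j, hv j hj, sub_sub_cancel x _⟩, j.2⟩

lemma preimage_sub_right_ball {E : Type*} [SeminormedAddCommGroup E] (a b : E) (r : ℝ) :
    (· - a) ⁻¹' Metric.ball b r = Metric.ball (a + b) r := by
  ext x
  rw [mem_preimage, mem_ball_iff_norm, mem_ball_iff_norm, sub_sub]

section IndicatorBounds

variable {α : Type*} {s t : Set α} {c : ℝ}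

lemma subset_of_mul_indicator_le_sub (hc : 0 < c) {f g : α → ℝ}
    (hf : Function.support f ⊆ t) (hg : Function.support g ⊆ t)
    (h : ∀ x, c * s.indicator (fun _ => (1 : ℝ)) x ≤ g x - f x) : s ⊆ t := by
  intro x hx
  by_contra hxt
  have hgap := h x
  rw [indicator_of_mem hx, Function.notMem_support.1 fun hxf => hxt (hf hxf),
    Function.notMem_support.1 fun hxg => hxt (hg hxg)] at hgap
  linarith

lemma mul_indicator_iUnion_le_tsum_sub_tsum {ι : Type*} {s : ι → Set α} (hc : 0 ≤ c)
    {f g : ι → ℝ} (hf : Summable f) (hg : Summable g) {x : α}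
    (h : ∀ j, c * (s j).indicator (fun _ => (1 : ℝ)) x ≤ g j - f j) :
    c * (⋃ j, s j).indicator (fun _ => (1 : ℝ)) x ≤ ∑' j, g j - ∑' j, f j := by
  have hgap_nonneg (j : ι) : 0 ≤ g j - f j :=
    (mul_nonneg hc (indicator_nonneg (fun _ _ => zero_le_one) x)).trans (h j)
  rw [← hg.tsum_sub hf]
  by_cases hx : x ∈ ⋃ j, s j
  · obtain ⟨j, hj⟩ := mem_iUnion.1 hx
    calc c * (⋃ j, s j).indicator (fun _ => (1 : ℝ)) x
        = c * (s j).indicator (fun _ => (1 : ℝ)) x := by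
          rw [indicator_of_mem hx, indicator_of_mem hj]
      _ ≤ g j - f j := h j
      _ ≤ ∑' j, (g j - f j) := (hg.sub hf).le_tsum j fun i _ => hgap_nonneg i
  · rw [indicator_of_notMem hx, mul_zero]
    exact tsum_nonneg hgap_nonneg

lemma mul_indicator_le_mul_indicator_of_subset (hc : 0 ≤ c) (hst : s ⊆ t) (x : α) :
    c * s.indicator (fun _ => (1 : ℝ)) x ≤ c * t.indicator (fun _ => (1 : ℝ)) x :=
  mul_le_mul_of_nonneg_left (indicator_le_indicator_of_subset hst (fun _ => zero_le_one) x) hc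

end IndicatorBounds

section Cubes

variable {d : ℕ} {G R r : ℝ} {D : Set (EuclideanSpace ℝ (Fin d))}

lemma isBounded_cube (d : ℕ) (L : ℝ) : Bornology.IsBounded (cube d L) := by
  have hIoo : Bornology.IsBounded (univ.pi fun _ : Fin d => Ioo (-(L / 2)) (L / 2)) :=
    Bornology.IsBounded.pi fun _ => Metric.isBounded_Ioo _ _
  exact ((PiLp.antilipschitzWith_ofLp 2 _).isBounded_preimage hIoo).subset fun x hx i _ => hx i

lemma ball_half_subset_cubeAt (d : ℕ) (G : ℝ) (x : EuclideanSpace ℝ (Fin d)) :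
    Metric.ball x (G / 2) ⊆ cubeAt d G x := fun y hy i =>
  abs_lt.1 ((PiLp.norm_apply_le (y - x) i).trans_lt (mem_ball_iff_norm.1 hy))

lemma add_mem_cubeAt {x y c : EuclideanSpace ℝ (Fin d)} (hx : x ∈ cubeAt d G c)
    (hy : y ∈ cube d R) : x + y ∈ cubeAt d (G + R) c := by
  intro i
  obtain ⟨hx₁, hx₂⟩ := hx i
  obtain ⟨hy₁, hy₂⟩ := hy i
  rw [PiLp.add_apply]
  constructor <;> linarith

lemma pairwise_half_le_dist (hD : ∀ x, (D ∩ cubeAt d G x).Subsingleton) :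
    D.Pairwise fun a b => G / 2 ≤ dist a b := by
  intro a ha b hb hab
  contrapose! hab
  have hsub := ball_half_subset_cubeAt d G a
  exact hD a ⟨ha, hsub (Metric.mem_ball_self (dist_nonneg.trans_lt hab))⟩
    ⟨hb, hsub (Metric.mem_ball'.2 hab)⟩

lemma exists_equidistributed_add (hD : ∀ x, (D ∩ cubeAt d G x).Nonempty)
    {y : D → EuclideanSpace ℝ (Fin d)} (hy : ∀ j, Metric.ball (y j) r ⊆ cube d R) :
    ∃ p : (Fin d → ℤ) → D, Equidistributed d (G + R) r fun k => p k + y (p k) := by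
  choose p hpD hp using fun k : Fin d → ℤ => hD (WithLp.toLp 2 fun i => (G + R) * (k i : ℝ))
  refine ⟨fun k => ⟨p k, hpD k⟩, fun k x hx => ?_⟩
  rw [← preimage_sub_right_ball, mem_preimage] at hx
  have hmem := add_mem_cubeAt (hp k) (hy _ hx)
  rwa [add_sub_cancel] at hmem

end Cubes

theorem potential_difference_lower_bound_general {d : ℕ} {G₁ G₂ R r c : ℝ} (hG₁ : 0 < G₁)
    (hc : 0 < c) {D : Set (EuclideanSpace ℝ (Fin d))} (hD : IsCubeDelone d G₁ G₂ D)
    {v w : D → EuclideanSpace ℝ (Fin d) → ℝ} (hv : ∀ j, Function.support (v j) ⊆ cube d R)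
    (hw : ∀ j, Function.support (w j) ⊆ cube d R)
    (hgap : ∀ j, ∃ x₀, ∀ x,
      c * (Metric.ball x₀ r).indicator (fun _ => (1 : ℝ)) x ≤ w j x - v j x) :
    ∃ z, Equidistributed d (G₂ + R) r z ∧ ∀ x,
      c * (⋃ k, Metric.ball (z k) r).indicator (fun _ => (1 : ℝ)) x ≤
        alloyPotential D w x - alloyPotential D v x := by
  choose y hy using hgap
  obtain ⟨p, hp⟩ := exists_equidistributed_add hD.nonempty_inter fun j =>
    subset_of_mul_indicator_le_sub hc (hv j) (hw j) (hy j)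
  have hsep := pairwise_half_le_dist hD.subsingleton_inter
  refine ⟨_, hp, fun x => ?_⟩
  have hgap_at (j : D) : c * (Metric.ball (j + y j) r).indicator (fun _ => (1 : ℝ)) x ≤
      w j (x - j) - v j (x - j) := by
    rw [← preimage_sub_right_ball]
    exact hy j (x - j)
  calc c * (⋃ k, Metric.ball (p k + y (p k)) r).indicator (fun _ => (1 : ℝ)) x
      ≤ c * (⋃ j : D, Metric.ball (j + y j) r).indicator (fun _ => (1 : ℝ)) x :=
        mul_indicator_le_mul_indicator_of_subset hc.le
          (iUnion_subset fun k => subset_iUnion (fun j : D => Metric.ball (j + y j) r) (p k)) x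
    _ ≤ alloyPotential D w x - alloyPotential D v x :=
        mul_indicator_iUnion_le_tsum_sub_tsum hc.le
          (summable_apply_sub_of_pairwise_le_dist (half_pos hG₁) hsep (isBounded_cube d R) hv x)
          (summable_apply_sub_of_pairwise_le_dist (half_pos hG₁) hsep (isBounded_cube d R) hw x)
          hgap_at

/-- **Lemma 4.1 (i)**: for a `(G₁,G₂)`-Delone set `D` and a monotone family of
single-site potentials `u_t` satisfying the abstract condition (2.2), the
difference `V_{ω+δ} - V_ω` of the random potentials dominates
`α₁ δ^{α₂} χ_{W_{β₁δ^{β₂}}(L)}` on `Λ_L`, for a suitable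
`(G₂+G_u, β₁δ^{β₂})`-equidistributed sequence. -/
theorem potential_difference_lower_bound
    (d : ℕ) (hd : 1 ≤ d)
    (ωm ωp : ℝ) (h1 : 0 ≤ ωm) (h2 : ωm < ωp) (h3 : ωp < 1)
    (Gu : ℕ) (hGu : 0 < Gu) (umax : ℝ) (humax : 0 ≤ umax)
    (α₁ β₁ : ℝ) (hα₁ : 0 < α₁) (hβ₁ : 0 < β₁)
    (α₂ β₂ : ℝ) (hα₂ : 0 ≤ α₂) (hβ₂ : 0 ≤ β₂)
    (u : ℝ → EuclideanSpace ℝ (Fin d) → ℝ)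
    (hmeas : ∀ t ∈ Set.Icc (0:ℝ) 1, Measurable (u t))
    (hsupp : ∀ t ∈ Set.Icc (0:ℝ) 1, Function.support (u t) ⊆ cube d Gu)
    (hbdd : ∀ t ∈ Set.Icc (0:ℝ) 1, ∀ x, |u t x| ≤ umax)
    (hmono : ∀ t ∈ Set.Icc ωm ωp, ∀ δ ∈ Set.Ioc (0:ℝ) (1 - ωp),
      ∃ x₀ ∈ cube d Gu, ∀ x,
        α₁ * δ ^ α₂ * (Metric.ball x₀ (β₁ * δ ^ β₂)).indicator (fun _ => (1:ℝ)) x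
          ≤ u (t + δ) x - u t x)
    (G₁ G₂ : ℝ) (hG₁ : 0 < G₁) (hG₁₂ : G₁ < G₂)
    (D : Set (EuclideanSpace ℝ (Fin d)))
    (hDel1 : ∀ x : EuclideanSpace ℝ (Fin d),
      (D ∩ {y | ∀ i, y i - x i ∈ Set.Ioo (-(G₁/2)) (G₁/2)}).Subsingleton)
    (hDel2 : ∀ x : EuclideanSpace ℝ (Fin d),
      (D ∩ {y | ∀ i, y i - x i ∈ Set.Ioo (-(G₂/2)) (G₂/2)}).Nonempty)
    (ω : ↥D → ℝ) (hω : ∀ j, ω j ∈ Set.Icc ωm ωp)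
    (δ : ℝ) (hδ : δ ∈ Set.Ioc (0:ℝ) (1 - ωp))
    (hsmall : β₁ * δ ^ β₂ < (G₂ + Gu) / 2)
    (L : ℕ) (hL : 0 < L) :
    ∃ z : (Fin d → ℤ) → EuclideanSpace ℝ (Fin d),
      Equidistributed d (G₂ + Gu) (β₁ * δ ^ β₂) z ∧
      ∀ x ∈ cube d ((G₂ + Gu) * L),
        α₁ * δ ^ α₂ *
            (Wset d (β₁ * δ ^ β₂) ((G₂ + Gu) * L) z).indicator
              (fun _ => (1:ℝ)) x ≤
          (∑' j : D, u (ω j + δ) (x - (j : EuclideanSpace ℝ (Fin d)))) -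
            ∑' j : D, u (ω j) (x - (j : EuclideanSpace ℝ (Fin d))) := by
  have hc : 0 < α₁ * δ ^ α₂ := mul_pos hα₁ (rpow_pos_of_pos hδ.1 α₂)
  have hω₀ (j : D) : ω j ∈ Icc (0 : ℝ) 1 := Icc_subset_Icc h1 h3.le (hω j)
  have hω₁ (j : D) : ω j + δ ∈ Icc (0 : ℝ) 1 :=
    ⟨add_nonneg (hω₀ j).1 hδ.1.le, by linarith [(hω j).2, hδ.2]⟩
  obtain ⟨z, hz, hle⟩ := potential_difference_lower_bound_general hG₁ hc ⟨hDel1, hDel2⟩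
    (fun j => hsupp _ (hω₀ j)) (fun j => hsupp _ (hω₁ j))
    fun j => (hmono _ (hω j) δ hδ).imp fun _ h => h.2
  exact ⟨z, hz, fun x _ =>
    (mul_indicator_le_mul_indicator_of_subset hc.le inter_subset_left x).trans (hle x)⟩
end
end

section
/- Let d ≥ 1 and let K ⊂ ℝ^d be a nonempty bounded open convex set with 0 in the closure of K. For t > 0 set K_t = {t·x : x ∈ K}, and K₀ = ∅. Then there exists a constant c > 0, depending only on K, such that for every t ∈ [0,1) and every δ ∈ (0, 1 − t], there exists x₀ ∈ ℝ^d with B(x₀, c·δ) ⊂ K_{t+δ} \ K_t. -/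
noncomputable section
open Real Set Pointwise

/-!
Choose a continuous linear functional `f` and an interior point `p` of `K` with `f p > 0`, and a
ball `B ⊆ K` around `p` on which `f > f p / 2`. As `t • K + δ • K = (t + δ) • K` for convex `K`,
the ball `t • y + δ • B` lies in `(t + δ) • K` for every `y ∈ K`. If `y` maximizes `t * f` on `K`
up to an error `δ * f p / 2`, then `f` is larger on `t • y + δ • B` than anywhere on `t • K`, so
this ball is disjoint from `t • K`.
-/

theorem exists_mem_forall_lt_add_of_bddAbove_image {ι α : Type*} [AddCommGroup α]
    [ConditionallyCompleteLinearOrder α] [IsOrderedAddMonoid α] {g : ι → α} {s : Set ι}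
    (hs : s.Nonempty) (hg : BddAbove (g '' s)) {ε : α} (hε : 0 < ε) :
    ∃ y ∈ s, ∀ x ∈ s, g x < g y + ε := by
  obtain ⟨_, ⟨y, hy, rfl⟩, hlt⟩ := exists_lt_of_lt_csSup (hs.image g) (sub_lt_self _ hε)
  exact ⟨y, hy, fun x hx =>
    (le_csSup hg (mem_image_of_mem g hx)).trans_lt (sub_lt_iff_lt_add.1 hlt)⟩

theorem vadd_smul_subset_add_smul {𝕜 E : Type*} [Field 𝕜] [LinearOrder 𝕜] [IsStrictOrderedRing 𝕜]
    [AddCommGroup E] [Module 𝕜 E] {K V : Set E} (hK : Convex 𝕜 K) (hV : V ⊆ K) {t δ : 𝕜}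
    (ht : 0 ≤ t) (hδ : 0 ≤ δ) {y : E} (hy : y ∈ K) : t • y +ᵥ δ • V ⊆ (t + δ) • K :=
  calc t • y +ᵥ δ • V ⊆ t • K + δ • V := vadd_set_subset_add (smul_mem_smul_set hy)
    _ ⊆ t • K + δ • K := by gcongr
    _ = (t + δ) • K := (hK.add_smul ht hδ).symm

theorem disjoint_vadd_smul_smul_of_forall_lt {R E : Type*} [Semiring R] [Preorder R]
    [AddCommMonoid E] [Module R E] {K V : Set E} {t δ : R} {y : E} (f : E →ₗ[R] R)
    (hf : ∀ x ∈ K, ∀ v ∈ V, t * f x < t * f y + δ * f v) :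
    Disjoint (t • y +ᵥ δ • V) (t • K) := by
  rw [Set.disjoint_left]
  rintro _ ⟨_, ⟨v, hv, rfl⟩, rfl⟩ ⟨x, hx, hxv⟩
  have hfx : t * f x = t * f y + δ * f v := by simpa using congrArg f hxv
  exact (hf x hx v hv).ne hfx

theorem exists_ball_subset_smul_diff_smul_of_pos {E : Type*} [SeminormedAddCommGroup E]
    [NormedSpace ℝ E] {K : Set E} (hK : Convex ℝ K) (f : StrongDual ℝ E)
    (hf : BddAbove (f '' K)) {p : E} (hp : p ∈ interior K) (hfp : 0 < f p) :
    ∃ c > 0, ∀ t ≥ 0, ∀ δ > 0, ∃ x₀ : E,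
      Metric.ball x₀ (c * δ) ⊆ (t + δ) • K \ t • K := by
  obtain ⟨c, hc, hball⟩ : ∃ c > 0, Metric.ball p c ⊆ K ∩ {x | f p / 2 < f x} :=
    Metric.mem_nhds_iff.1 <| Filter.inter_mem (mem_interior_iff_mem_nhds.1 hp)
      (f.continuous.continuousAt.eventually_const_lt (half_lt_self hfp))
  refine ⟨c, hc, fun t ht δ hδ => ?_⟩
  have htf : BddAbove ((fun x => t * f x) '' K) := by
    simpa only [image_image] using (monotone_mul_left_of_nonneg ht).map_bddAbove hf
  obtain ⟨y, hy, hmax⟩ := exists_mem_forall_lt_add_of_bddAbove_image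
    ⟨p, interior_subset hp⟩ htf (mul_pos hδ (half_pos hfp))
  have hgain : ∀ x ∈ K, ∀ v ∈ Metric.ball p c, t * f x < t * f y + δ * f v := fun x hx v hv =>
    calc t * f x < t * f y + δ * (f p / 2) := hmax x hx
      _ ≤ t * f y + δ * f v := by gcongr; exact (hball hv).2.le
  have hx₀ : Metric.ball (t • y + δ • p) (c * δ) = t • y +ᵥ δ • Metric.ball p c := by
    rw [smul_ball hδ.ne', Metric.vadd_ball, Real.norm_of_nonneg hδ.le, mul_comm, vadd_eq_add]
  refine ⟨t • y + δ • p, hx₀ ▸ subset_sdiff.2 ⟨?_, ?_⟩⟩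
  · exact vadd_smul_subset_add_smul hK (hball.trans inter_subset_left) ht hδ.le hy
  · exact disjoint_vadd_smul_smul_of_forall_lt f.toLinearMap hgain

section Normed

variable {E : Type*} [NormedAddCommGroup E] [NormedSpace ℝ E] [Nontrivial E] {K : Set E}

theorem exists_strongDual_pos_of_interior_nonempty (hK : (interior K).Nonempty) :
    ∃ f : StrongDual ℝ E, ∃ p ∈ interior K, 0 < f p := by
  obtain ⟨p, hp, hp0⟩ := (dense_compl_singleton (0 : E)).inter_open_nonempty _ isOpen_interior hK
  obtain ⟨f, -, hfp⟩ := exists_dual_vector ℝ p (norm_ne_zero_iff.2 hp0)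
  exact ⟨f, p, hp, hfp ▸ norm_pos_iff.2 hp0⟩

theorem convex_dilation_ball_general (hKint : (interior K).Nonempty)
    (hKbdd : Bornology.IsBounded K) (hKconv : Convex ℝ K) :
    ∃ c > 0, ∀ t ≥ 0, ∀ δ > 0, ∃ x₀ : E,
      Metric.ball x₀ (c * δ) ⊆ (t + δ) • K \ t • K := by
  obtain ⟨f, p, hp, hfp⟩ := exists_strongDual_pos_of_interior_nonempty hKint
  exact exists_ball_subset_smul_diff_smul_of_pos hKconv f
    (f.lipschitz.isBounded_image hKbdd).bddAbove hp hfp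

end Normed

/-- **Convex dilation lemma** (condition (B) implies (A), Appendix B): for a
nonempty bounded open convex `K ⊂ ℝ^d` with `0 ∈ closure K`, setting
`K_t = t • K` for `t > 0` and `K₀ = ∅`, there is `c > 0` such that for all
`t ∈ [0,1)` and `δ ∈ (0, 1-t]` the difference `K_{t+δ} \ K_t` contains a ball
of radius `c δ`. -/
theorem convex_dilation_ball (d : ℕ) (hd : 1 ≤ d)
    (K : Set (EuclideanSpace ℝ (Fin d)))
    (hKne : K.Nonempty) (hKopen : IsOpen K) (hKbdd : Bornology.IsBounded K)
    (hKconv : Convex ℝ K)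
    (hK0 : (0 : EuclideanSpace ℝ (Fin d)) ∈ closure K) :
    ∃ c > 0, ∀ t ∈ Set.Ico (0:ℝ) 1, ∀ δ ∈ Set.Ioc (0:ℝ) (1 - t),
      ∃ x₀ : EuclideanSpace ℝ (Fin d),
        Metric.ball x₀ (c * δ) ⊆
          ((t + δ) • K) \ (if t = 0 then (∅ : Set (EuclideanSpace ℝ (Fin d))) else t • K) := by
  have : Nonempty (Fin d) := ⟨⟨0, hd⟩⟩
  obtain ⟨c, hc, h⟩ :=
    convex_dilation_ball_general (hKopen.interior_eq.symm ▸ hKne) hKbdd hKconv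
  refine ⟨c, hc, fun t ht δ hδ => (h t ht.1 δ hδ.1).imp fun x₀ hx₀ => hx₀.trans ?_⟩
  gcongr
  split_ifs
  exacts [empty_subset _, Subset.rfl]
end
end

section
/- Let d ≥ 1, 0 < ω₊ < 1, and let r : [0,∞) → [0,∞) be bounded, non-increasing and compactly supported, and suppose there exists x̃ > 0 at which r is differentiable with r(x̃) > 0 and r'(x̃) < 0. Define u_t : ℝ^d → [0,∞) for t ∈ (0,1] by u_t(x) = r(|x|/t), and u₀ ≡ 0. Then there exist constants α₁, β₁ > 0 such that for every t ∈ [0, ω₊] and every δ ∈ (0, 1 − ω₊] there exists x₀ ∈ ℝ^d with u_{t+δ}(x) − u_t(x) ≥ α₁·δ·χ_{B(x₀, β₁·δ)}(x) for all x ∈ ℝ^d. -/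
noncomputable section
open Real Set

open Filter Topology

/-!
A non-increasing `r` with negative left derivative at `b > 0` lies above a line through
`(b, r b)` of negative slope on all of `[0, b]`: the derivative gives this near `b`, and
monotonicity extends it at the cost of a flatter line. If `t b ≤ |x| ≤ (t + δ / 2) b`, then
`|x| / t` is to the right of `b`, so `u_t x ≤ r b`, whereas `|x| / (t + δ)` is to the left of `b`
by a distance at least proportional to `δ`, so `u_{t+δ} x - r b` is at least proportional to `δ`.
This annulus contains a ball of radius `b δ / 4`, and elsewhere `u_t x` is non-decreasing in `t`.
-/

section LeftDerivative

variable {f : ℝ → ℝ} {a b c m : ℝ}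

theorem eventually_nhdsLT_mul_sub_lt_sub (hf : HasDerivWithinAt f m (Iio b) b) (hc : c < -m) :
    ∀ᶠ y in 𝓝[<] b, c * (b - y) < f y - f b := by
  filter_upwards [hf.limsup_slope_le' self_notMem_Iio (lt_neg_of_lt_neg hc),
    self_mem_nhdsWithin] with y hslope hy
  rw [slope_def_field, div_lt_iff_of_neg (sub_neg.2 hy)] at hslope
  linarith

theorem exists_pos_mul_sub_le_sub_of_eventually_nhdsLT (hab : a < b) (hf : AntitoneOn f (Icc a b))
    (hc : 0 < c) (h : ∀ᶠ y in 𝓝[<] b, c * (b - y) < f y - f b) :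
    ∃ c' > 0, ∀ y ∈ Icc a b, c' * (b - y) ≤ f y - f b := by
  obtain ⟨l, hlb : l < b, hl⟩ :=
    mem_nhdsLT_iff_exists_Ico_subset.1 (h.and (Ioo_mem_nhdsLT hab))
  obtain ⟨hfl, hal, -⟩ := hl (left_mem_Ico.2 hlb)
  have hba : 0 < b - a := sub_pos.2 hab
  refine ⟨c * (b - l) / (b - a), by have := sub_pos.2 hlb; positivity, fun y hy => ?_⟩
  rw [div_mul_eq_mul_div, div_le_iff₀ hba]
  rcases lt_or_ge y l with hyl | hly
  · have hfy : c * (b - l) ≤ f y - f b :=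
      hfl.le.trans (sub_le_sub_right (hf hy ⟨hal.le, hlb.le⟩ hyl.le) _)
    have hya : b - y ≤ b - a := sub_le_sub_left hy.1 b
    have hcl : 0 ≤ c * (b - l) := (mul_pos hc (sub_pos.2 hlb)).le
    exact mul_le_mul hfy hya (sub_nonneg.2 hy.2) (hcl.trans hfy)
  · have hfy : c * (b - y) ≤ f y - f b := by
      rcases hy.2.eq_or_lt with rfl | hyb
      · simp
      · exact (hl ⟨hly, hyb⟩).1.le
    have hcy : 0 ≤ c * (b - y) := mul_nonneg hc.le (sub_nonneg.2 hy.2)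
    calc c * (b - l) * (b - y) = c * (b - y) * (b - l) := by ring
      _ ≤ (f y - f b) * (b - a) :=
        mul_le_mul hfy (sub_le_sub_left hal.le b) (sub_pos.2 hlb).le (hcy.trans hfy)

theorem exists_pos_mul_sub_le_sub_of_hasDerivWithinAt_neg (hab : a < b)
    (hf : AntitoneOn f (Icc a b)) (hderiv : HasDerivWithinAt f m (Iio b) b) (hm : m < 0) :
    ∃ c > 0, ∀ y ∈ Icc a b, c * (b - y) ≤ f y - f b :=
  exists_pos_mul_sub_le_sub_of_eventually_nhdsLT hab hf (half_pos (neg_pos.2 hm))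
    (eventually_nhdsLT_mul_sub_lt_sub hderiv (half_lt_self (neg_pos.2 hm)))

end LeftDerivative

theorem norm_mem_Icc_of_mem_closedBall {E : Type*} [SeminormedAddCommGroup E] {x x₀ : E} {ρ : ℝ}
    (hx : x ∈ Metric.closedBall x₀ ρ) : ‖x‖ ∈ Icc (‖x₀‖ - ρ) (‖x₀‖ + ρ) :=
  mem_Icc_iff_abs_le.1 ((abs_norm_sub_norm_le x₀ x).trans (mem_closedBall_iff_norm'.1 hx))

/-- The dilation `u_t` by the factor `t` of the radial function `x ↦ r ‖x‖`, with `u_0 = 0`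
(and not `r 0`, the value the junk quotient `‖x‖ / 0 = 0` would give). -/
def radialDilation {E : Type*} [Norm E] (r : ℝ → ℝ) (t : ℝ) (x : E) : ℝ :=
  if t = 0 then 0 else r (‖x‖ / t)

section RadialDilation

variable {r : ℝ → ℝ} {b c t δ T : ℝ}

section Norm

variable {E : Type*} [Norm E] {x : E}

theorem radialDilation_of_ne_zero (ht : t ≠ 0) : radialDilation r t x = r (‖x‖ / t) :=
  if_neg ht

theorem radialDilation_le_of_mul_le_norm (hr : AntitoneOn r (Ici 0)) (hb : 0 ≤ b) (hrb : 0 ≤ r b)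
    (ht : 0 ≤ t) (hx : b * t ≤ ‖x‖) : radialDilation r t x ≤ r b := by
  rcases ht.eq_or_lt with rfl | ht
  · simpa only [radialDilation, if_true] using hrb
  · rw [radialDilation_of_ne_zero ht.ne']
    have hbx : b ≤ ‖x‖ / t := (le_div_iff₀ ht).2 hx
    exact hr hb (hb.trans hbx) hbx

end Norm

variable {E : Type*} [SeminormedAddCommGroup E] {x : E}

theorem monotoneOn_radialDilation (hr : AntitoneOn r (Ici 0)) (hr₀ : ∀ y, 0 ≤ y → 0 ≤ r y) :
    MonotoneOn (fun t => radialDilation r t x) (Ici 0) := by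
  intro s hs t _ hst
  rcases hst.eq_or_lt with rfl | hst
  · rfl
  · have ht : 0 < t := hs.trans_lt hst
    have hxt : 0 ≤ ‖x‖ / t := by positivity
    simp only [radialDilation_of_ne_zero ht.ne']
    refine radialDilation_le_of_mul_le_norm hr hxt (hr₀ _ hxt) hs ?_
    calc ‖x‖ / t * s ≤ ‖x‖ / t * t := by gcongr
      _ = ‖x‖ := div_mul_cancel₀ _ ht.ne'

theorem le_radialDilation_sub_radialDilation (hr : AntitoneOn r (Ici 0)) (hb : 0 ≤ b)
    (hrb : 0 ≤ r b) (hc : 0 ≤ c) (hline : ∀ y ∈ Icc 0 b, c * (b - y) ≤ r y - r b)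
    (ht : 0 ≤ t) (hδ : 0 < δ) (htδ : t + δ ≤ T) (hx : ‖x‖ ∈ Icc (b * t) (b * (t + δ / 2))) :
    c * b / (2 * T) * δ ≤ radialDilation r (t + δ) x - radialDilation r t x := by
  have hs : 0 < t + δ := by positivity
  have hgap : b * δ / (2 * (t + δ)) ≤ b - ‖x‖ / (t + δ) := by
    have hnorm : ‖x‖ / (t + δ) ≤ b * (t + δ / 2) / (t + δ) := by gcongr; exact hx.2
    have hmid : b * (t + δ / 2) / (t + δ) = b - b * δ / (2 * (t + δ)) := by field_simp; ring
    linarith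
  have hmem : ‖x‖ / (t + δ) ∈ Icc 0 b :=
    ⟨by positivity, sub_nonneg.1 (le_trans (by positivity) hgap)⟩
  calc c * b / (2 * T) * δ = c * (b * δ / (2 * T)) := by ring
    _ ≤ c * (b * δ / (2 * (t + δ))) := by gcongr
    _ ≤ c * (b - ‖x‖ / (t + δ)) := by gcongr
    _ ≤ r (‖x‖ / (t + δ)) - r b := hline _ hmem
    _ ≤ radialDilation r (t + δ) x - radialDilation r t x := by
      rw [radialDilation_of_ne_zero hs.ne']
      exact sub_le_sub_left (radialDilation_le_of_mul_le_norm hr hb hrb ht hx.1) _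

end RadialDilation

theorem radial_breather_condition_general {E : Type*} [SeminormedAddCommGroup E]
    [NormedSpace ℝ E] [NontrivialTopology E] {r : ℝ → ℝ} {b m T : ℝ} (hr₀ : ∀ y, 0 ≤ y → 0 ≤ r y)
    (hr : AntitoneOn r (Ici 0)) (hb : 0 < b) (hderiv : HasDerivWithinAt r m (Iio b) b)
    (hm : m < 0) (hT : 0 < T) :
    ∃ α > 0, ∃ β > 0, ∀ t δ : ℝ, 0 ≤ t → 0 < δ → t + δ ≤ T → ∃ x₀ : E, ∀ x : E,
      α * δ * (Metric.ball x₀ (β * δ)).indicator (fun _ => (1 : ℝ)) x ≤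
        radialDilation r (t + δ) x - radialDilation r t x := by
  obtain ⟨c, hc, hline⟩ := exists_pos_mul_sub_le_sub_of_hasDerivWithinAt_neg hb
    (hr.mono Icc_subset_Ici_self) hderiv hm
  refine ⟨c * b / (2 * T), by positivity, b / 4, by positivity, fun t δ ht hδ htδ => ?_⟩
  obtain ⟨x₀, hx₀⟩ := exists_norm_eq E (c := b * (t + δ / 4)) (by positivity)
  refine ⟨x₀, fun x => ?_⟩
  by_cases hx : x ∈ Metric.ball x₀ (b / 4 * δ)
  · rw [indicator_of_mem hx, mul_one]
    obtain ⟨hlower, hupper⟩ := norm_mem_Icc_of_mem_closedBall (Metric.ball_subset_closedBall hx)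
    rw [hx₀] at hlower hupper
    exact le_radialDilation_sub_radialDilation hr hb.le (hr₀ b hb.le) hc.le hline ht hδ htδ
      ⟨by linarith, by linarith⟩
  · rw [indicator_of_notMem hx, mul_zero, sub_nonneg]
    exact monotoneOn_radialDilation hr hr₀ ht (add_nonneg ht hδ.le) (le_add_of_nonneg_right hδ.le)

/-- **Radial single-site potentials satisfy the abstract breather condition**
(condition (C) implies (A), Appendix B): if `r` is bounded, non-increasing,
compactly supported on `[0,∞)` and differentiable at some `x̃ > 0` with
`r(x̃) > 0` and `r'(x̃) < 0`, then the dilations `u_t(x) = r(|x|/t)` (with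
`u₀ ≡ 0`) satisfy `u_{t+δ} - u_t ≥ α₁ δ χ_{B(x₀, β₁δ)}` for suitable
`α₁, β₁ > 0`. -/
theorem radial_breather_condition (d : ℕ) (hd : 1 ≤ d)
    (ωp : ℝ) (h1 : 0 < ωp) (h2 : ωp < 1)
    (r : ℝ → ℝ)
    (hr_nonneg : ∀ x, 0 ≤ x → 0 ≤ r x)
    (hr_bdd : ∃ C, ∀ x, 0 ≤ x → r x ≤ C)
    (hr_mono : ∀ x y, 0 ≤ x → x ≤ y → r y ≤ r x)
    (hr_supp : ∃ R, ∀ x, R ≤ x → r x = 0)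
    (xt m : ℝ) (hxt : 0 < xt) (hderiv : HasDerivAt r m xt) (hm : m < 0)
    (hval : 0 < r xt) :
    ∃ α₁ > (0:ℝ), ∃ β₁ > (0:ℝ),
      ∀ t ∈ Set.Icc (0:ℝ) ωp, ∀ δ ∈ Set.Ioc (0:ℝ) (1 - ωp),
        ∃ x₀ : EuclideanSpace ℝ (Fin d), ∀ x : EuclideanSpace ℝ (Fin d),
          α₁ * δ * (Metric.ball x₀ (β₁ * δ)).indicator (fun _ => (1:ℝ)) x ≤
            (if t + δ = 0 then 0 else r (‖x‖ / (t + δ))) -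
              (if t = 0 then 0 else r (‖x‖ / t)) := by
  have : Nonempty (Fin d) := ⟨⟨0, hd⟩⟩
  obtain ⟨α, hα, β, hβ, h⟩ := radial_breather_condition_general
    (E := EuclideanSpace ℝ (Fin d)) hr_nonneg (fun x hx y _ hxy => hr_mono x y hx hxy) hxt
    hderiv.hasDerivWithinAt hm one_pos
  exact ⟨α, hα, β, hβ, fun t ht δ hδ => h t δ ht.1 hδ.1 (by linarith [ht.2, hδ.2])⟩
end
end

section
/- Let d ≥ 1 and δ ∈ (0,1/2). Then for every x ∈ S₂ and every y ∈ ℝ^{d+1} with y_{d+1} ≥ 0 and y ∉ S₃, one has |x − y| ≥ δ²/16; that is, the Euclidean distance between S₂ and {y ∈ ℝ^{d+1} : y_{d+1} ≥ 0} \ S₃ is at least δ²/16. -/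
noncomputable section
open Real Set

/-- The set `S_c = {x ∈ ℝ^{d+1} : ψ(x) > c, x_{d+1} ∈ [0,1]}`. -/
def Sset (d : ℕ) (c : ℝ) : Set (EuclideanSpace ℝ (Fin (d+1))) :=
  {x | c < psiW d x ∧ x (Fin.last d) ∈ Set.Icc (0:ℝ) 1}

/-!
Since `ψ` is quadratic with Hessian at least `-1/2`,
`ψ x - ψ y ≤ ‖∇ψ x‖ |x - y| + |x - y|² / 4`, and on `S_c` the level condition controls `x'`, which
gives `‖∇ψ‖ ≤ √(1 - c)`. So leaving `S_{c'}` from a point of `S_c` through the level surface costs a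
distance comparable to `c - c'`, while for `c` close to `0` the points of `S_c` stay far below the
other boundary piece `x_{d+1} = 1`.
-/

/-- The gradient `∇ψ(x) = (-x'/2, x_{d+1} - 1)` of the weight `ψ`, given by its explicit formula;
it is the linear term of the expansion of `ψ` around `x`. -/
def psiGrad (d : ℕ) (x : EuclideanSpace ℝ (Fin (d + 1))) : EuclideanSpace ℝ (Fin (d + 1)) :=
  WithLp.toLp 2 (Fin.snoc (fun i : Fin d => -(x i.castSucc) / 2) (x (Fin.last d) - 1))

section

variable {d : ℕ} {x y : EuclideanSpace ℝ (Fin (d + 1))} {c c' r : ℝ}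

@[simp]
lemma psiGrad_castSucc (x : EuclideanSpace ℝ (Fin (d + 1))) (i : Fin d) :
    psiGrad d x i.castSucc = -(x i.castSucc) / 2 := by
  simp [psiGrad]

@[simp]
lemma psiGrad_last (x : EuclideanSpace ℝ (Fin (d + 1))) :
    psiGrad d x (Fin.last d) = x (Fin.last d) - 1 := by
  simp [psiGrad]

lemma psiW_add (x v : EuclideanSpace ℝ (Fin (d + 1))) :
    psiW d (x + v) =
      psiW d x + inner ℝ (psiGrad d x) v + 3 / 4 * v (Fin.last d) ^ 2 - ‖v‖ ^ 2 / 4 := by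
  have sum_sq_add : ∑ i : Fin d, (x i.castSucc + v i.castSucc) ^ 2 =
      ∑ i : Fin d, x i.castSucc ^ 2 - 4 * ∑ i : Fin d, v i.castSucc * (-(x i.castSucc) / 2)
        + ∑ i : Fin d, v i.castSucc ^ 2 := by
    rw [Finset.mul_sum, ← Finset.sum_sub_distrib, ← Finset.sum_add_distrib]
    exact Finset.sum_congr rfl fun i _ => by ring
  simp only [psiW, PiLp.add_apply, PiLp.inner_apply, EuclideanSpace.real_norm_sq_eq,
    Fin.sum_univ_castSucc, psiGrad_castSucc, psiGrad_last, RCLike.inner_apply, conj_trivial,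
    sum_sq_add]
  ring

lemma norm_psiGrad_sq (x : EuclideanSpace ℝ (Fin (d + 1))) :
    ‖psiGrad d x‖ ^ 2 = 1 - psiW d x - 3 * x (Fin.last d) * (1 - x (Fin.last d) / 2) := by
  simp only [psiW, EuclideanSpace.real_norm_sq_eq, Fin.sum_univ_castSucc, psiGrad_castSucc,
    psiGrad_last, div_pow, neg_sq, ← Finset.sum_div]
  ring

lemma norm_psiGrad_le_sqrt (hx : x ∈ Sset d c) : ‖psiGrad d x‖ ≤ √(1 - c) := by
  obtain ⟨level_lt, last_nonneg, last_le_one⟩ := hx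
  refine Real.le_sqrt_of_sq_le ?_
  have : 0 ≤ x (Fin.last d) * (1 - x (Fin.last d) / 2) :=
    mul_nonneg last_nonneg (by linarith)
  linarith [norm_psiGrad_sq x]

lemma psiW_sub_le (x y : EuclideanSpace ℝ (Fin (d + 1))) :
    psiW d x - psiW d y ≤ ‖psiGrad d x‖ * dist x y + dist x y ^ 2 / 4 := by
  have expansion := psiW_add x (y - x)
  have cauchy_schwarz := neg_le_of_abs_le (abs_real_inner_le_norm (psiGrad d x) (y - x))
  rw [add_sub_cancel] at expansion
  rw [dist_comm, dist_eq_norm]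
  linarith [sq_nonneg ((y - x) (Fin.last d))]

lemma psiW_le_last (x : EuclideanSpace ℝ (Fin (d + 1))) :
    psiW d x ≤ -(x (Fin.last d)) + x (Fin.last d) ^ 2 / 2 :=
  sub_le_self _ (by positivity)

lemma last_lt_one_sub_of_mem_Sset (hx : x ∈ Sset d c) (hc : (r ^ 2 - 1) / 2 ≤ c) :
    x (Fin.last d) < 1 - r := by
  have sq_lt : r ^ 2 < (1 - x (Fin.last d)) ^ 2 := by
    linarith [psiW_le_last x, hx.1]
  linarith [lt_of_pow_lt_pow_left₀ 2 (sub_nonneg.2 hx.2.2) sq_lt]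

lemma last_le_last_add_dist (x y : EuclideanSpace ℝ (Fin (d + 1))) :
    y (Fin.last d) ≤ x (Fin.last d) + dist x y := by
  have := (le_abs_self _).trans (PiLp.norm_apply_le (y - x) (Fin.last d))
  rw [PiLp.sub_apply, ← dist_eq_norm, dist_comm] at this
  linarith

theorem le_dist_of_mem_Sset_of_notMem_Sset (hx : x ∈ Sset d c) (hy : 0 ≤ y (Fin.last d))
    (hy' : y ∉ Sset d c') (hc : (r ^ 2 - 1) / 2 ≤ c) (hr : √(1 - c) * r + r ^ 2 / 4 ≤ c - c') :
    r ≤ dist x y := by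
  by_contra! dist_lt
  have last_le_one : y (Fin.last d) ≤ 1 := by
    linarith [last_le_last_add_dist x y, last_lt_one_sub_of_mem_Sset hx hc]
  have level_drop : psiW d x - psiW d y ≤ c - c' := calc
    psiW d x - psiW d y ≤ ‖psiGrad d x‖ * dist x y + dist x y ^ 2 / 4 := psiW_sub_le x y
    _ ≤ √(1 - c) * r + r ^ 2 / 4 := by
      gcongr
      exact norm_psiGrad_le_sqrt hx
    _ ≤ c - c' := hr
  exact hy' ⟨by linarith [hx.1], hy, last_le_one⟩

end

/-- With `r = δ² / 16` the condition on `δ` reads `r² + 4 r ≤ 1`, which places `S₂` below the height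
`1 - r`. -/
theorem S2_S3_distance_general (d : ℕ) (δ : ℝ) (hδ : δ ^ 4 + 64 * δ ^ 2 ≤ 256)
    (x : EuclideanSpace ℝ (Fin (d + 1))) (hx : x ∈ Sset d (-(δ ^ 2 / 8)))
    (y : EuclideanSpace ℝ (Fin (d + 1))) (hy1 : 0 ≤ y (Fin.last d))
    (hy2 : y ∉ Sset d (-(δ ^ 2 / 4))) :
    δ ^ 2 / 16 ≤ dist x y := by
  have sq_le : δ ^ 2 ≤ 4 := by nlinarith [sq_nonneg (δ ^ 2)]
  have sqrt_le : √(1 - -(δ ^ 2 / 8)) ≤ 3 / 2 := Real.sqrt_le_iff.2 ⟨by norm_num, by linarith⟩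
  refine le_dist_of_mem_Sset_of_notMem_Sset hx hy1 hy2 (by linarith) ?_
  calc √(1 - -(δ ^ 2 / 8)) * (δ ^ 2 / 16) + (δ ^ 2 / 16) ^ 2 / 4
      ≤ 3 / 2 * (δ ^ 2 / 16) + 4 / 16 * (δ ^ 2 / 16) / 4 := by
        rw [sq (δ ^ 2 / 16)]
        gcongr
    _ ≤ -(δ ^ 2 / 8) - -(δ ^ 2 / 4) := by linarith [sq_nonneg δ]

/-- **Distance between the level sets `S₂` and `S₃`** (Appendix A.1.3): for
`δ ∈ (0,1/2)`, with `ψ₂ = -δ²/8` and `ψ₃ = -δ²/4`, the distance between `S₂`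
and the complement of `S₃` in the upper half-space is at least `δ²/16`. -/
theorem S2_S3_distance (d : ℕ) (hd : 1 ≤ d) (δ : ℝ)
    (hδ : δ ∈ Set.Ioo (0:ℝ) (1/2))
    (x : EuclideanSpace ℝ (Fin (d+1))) (hx : x ∈ Sset d (-(δ^2/8)))
    (y : EuclideanSpace ℝ (Fin (d+1))) (hy1 : 0 ≤ y (Fin.last d))
    (hy2 : y ∉ Sset d (-(δ^2/4))) :
    δ^2 / 16 ≤ dist x y := by
  have pow_le_one (n : ℕ) : δ ^ n ≤ 1 := pow_le_one₀ hδ.1.le (by linarith [hδ.2])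
  exact S2_S3_distance_general d δ (by linarith [pow_le_one 2, pow_le_one 4]) x hx y hy1 hy2
end
end
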